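/- Assume a sequence of metric spaces (X_i)_{i∈ℕ} and a metric space X have an asymptotic relation, with X separable, and let E_i : X_i → [0,+∞] and E : X → [0,+∞]. If E_i compactly converges to E, then E is compact: every bounded sequence x_j ∈ X with limsup_j E(x_j) < ∞ has a convergent subsequence in X. -/

import Mathlib

/-!
Pick recovery sequences `z j i → x j` with `E i (z j i) → F (x j)`, and approximations
`a m i → q m` of a dense sequence `q` of `Y`. A diagonal choice `w i = z (J i) i` with `J i → ∞`
slowly keeps the energies bounded and makes `dist (a m i) (w i)` close to `dist (q m) (x (J i))`
for all `m ≤ J i`. Asymptotic compactness gives a subsequence `w (φ k)` converging to some `y`,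
and then `dist (q m) (x (J (φ k))) → dist (q m) y` for every `m`. Choosing `q m` close to `y`
forces `x (J (φ k)) → y`; this is where separability enters.
-/

open Filter Topology Metric Set ENNReal

universe u v

/-- Convergence of a sequence `x i ∈ X i` to `y ∈ Y` in the glued space. -/
def ConvTo (X : ℕ → Type u) (Y : Type v)
    (T : TopologicalSpace ((Σ i, X i) ⊕ Y)) (x : ∀ i, X i) (y : Y) : Prop :=
  Tendsto (fun i => (Sum.inl ⟨i, x i⟩ : (Σ i, X i) ⊕ Y)) atTop
    (@nhds _ T (Sum.inr y))

/-- Convergence of a subsequence. -/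
def SubConvTo (X : ℕ → Type u) (Y : Type v)
    (T : TopologicalSpace ((Σ i, X i) ⊕ Y)) (φ : ℕ → ℕ)
    (x : ∀ k, X (φ k)) (y : Y) : Prop :=
  Tendsto (fun k => (Sum.inl ⟨φ k, x k⟩ : (Σ i, X i) ⊕ Y)) atTop
    (@nhds _ T (Sum.inr y))

/-- An asymptotic relation between the sequence of metric spaces `X i` and the
metric space `Y`: a topology on the disjoint union satisfying (A1)-(A4). -/
structure AsymptoticRelation (X : ℕ → Type u) (Y : Type v)
    [∀ i, MetricSpace (X i)] [MetricSpace Y]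
    (T : TopologicalSpace ((Σ i, X i) ⊕ Y)) : Prop where
  closed_piece : ∀ i, @IsClosed _ T
    (Set.range fun x : X i => (Sum.inl ⟨i, x⟩ : (Σ i, X i) ⊕ Y))
  closed_limit : @IsClosed _ T (Set.range (Sum.inr : Y → (Σ i, X i) ⊕ Y))
  induced_piece : ∀ i, TopologicalSpace.induced
      (fun x : X i => (Sum.inl ⟨i, x⟩ : (Σ i, X i) ⊕ Y)) T
      = (inferInstance : TopologicalSpace (X i))
  induced_limit : TopologicalSpace.induced (Sum.inr : Y → (Σ i, X i) ⊕ Y) T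
      = (inferInstance : TopologicalSpace Y)
  exists_approx : ∀ y : Y, ∃ x : ∀ i, X i, ConvTo X Y T x y
  dist_conv : ∀ (x y : ∀ i, X i) (a b : Y), ConvTo X Y T x a → ConvTo X Y T y b →
      Tendsto (fun i => dist (x i) (y i)) atTop (nhds (dist a b))
  close_conv : ∀ (x y : ∀ i, X i) (a : Y), ConvTo X Y T x a →
      Tendsto (fun i => dist (x i) (y i)) atTop (nhds 0) → ConvTo X Y T y a

/-- A sequence `x i ∈ X i` is bounded. -/
def BoundedSeq (X : ℕ → Type u) (Y : Type v)
    [∀ i, MetricSpace (X i)] [MetricSpace Y]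
    (T : TopologicalSpace ((Σ i, X i) ⊕ Y)) (x : ∀ i, X i) : Prop :=
  ∃ (o : ∀ i, X i) (p : Y), ConvTo X Y T o p ∧ ∃ C : ℝ, ∀ i, dist (x i) (o i) ≤ C

/-- The asymptotic relation is asymptotically compact. -/
def AsympCompactRel (X : ℕ → Type u) (Y : Type v)
    [∀ i, MetricSpace (X i)] [MetricSpace Y]
    (T : TopologicalSpace ((Σ i, X i) ⊕ Y)) : Prop :=
  ∀ x : ∀ i, X i, BoundedSeq X Y T x →
    ∃ φ : ℕ → ℕ, StrictMono φ ∧ ∃ y : Y, SubConvTo X Y T φ (fun k => x (φ k)) y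

/-- Γ-convergence of functionals `E i : X i → [0,∞]` to `F : Y → [0,∞]`. -/
def GammaConv (X : ℕ → Type u) (Y : Type v)
    [∀ i, MetricSpace (X i)] [MetricSpace Y]
    (T : TopologicalSpace ((Σ i, X i) ⊕ Y))
    (E : ∀ i, X i → ℝ≥0∞) (F : Y → ℝ≥0∞) : Prop :=
  (∀ y : Y, ∃ x : ∀ i, X i, ConvTo X Y T x y ∧
      Tendsto (fun i => E i (x i)) atTop (nhds (F y))) ∧
  (∀ (x : ∀ i, X i) (y : Y), ConvTo X Y T x y →
      F y ≤ atTop.liminf fun i => E i (x i))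

/-- Asymptotic compactness of a family of functionals. -/
def AsympCompactFam (X : ℕ → Type u) (Y : Type v)
    [∀ i, MetricSpace (X i)] [MetricSpace Y]
    (T : TopologicalSpace ((Σ i, X i) ⊕ Y))
    (E : ∀ i, X i → ℝ≥0∞) : Prop :=
  ∀ x : ∀ i, X i, BoundedSeq X Y T x →
    (atTop.limsup fun i => E i (x i)) < ⊤ →
    ∃ φ : ℕ → ℕ, StrictMono φ ∧ ∃ y : Y, SubConvTo X Y T φ (fun k => x (φ k)) y

/-- Compact convergence of functionals. -/
def CompactConv (X : ℕ → Type u) (Y : Type v)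
    [∀ i, MetricSpace (X i)] [MetricSpace Y]
    (T : TopologicalSpace ((Σ i, X i) ⊕ Y))
    (E : ∀ i, X i → ℝ≥0∞) (F : Y → ℝ≥0∞) : Prop :=
  GammaConv X Y T E F ∧ AsympCompactFam X Y T E

/-- Diagonal selection: `J i` is the largest `j ≤ i` for which `P j i` holds. -/
lemma exists_diagonal (P : ℕ → ℕ → Prop) (h : ∀ j, ∀ᶠ i in atTop, P j i) :
    ∃ J : ℕ → ℕ, Tendsto J atTop atTop ∧ ∀ᶠ i in atTop, P (J i) i := by
  classical
  refine ⟨fun i => Nat.findGreatest (fun j => P j i) i, ?_, ?_⟩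
  · refine tendsto_atTop.2 fun j => ?_
    filter_upwards [h j, eventually_ge_atTop j] with i hi hji
    exact Nat.le_findGreatest hji hi
  · filter_upwards [h 0] with i hi
    exact Nat.findGreatest_spec (P := fun j => P j i) (Nat.zero_le i) hi

/-- The distance axiom of an asymptotic relation, along a subsequence. -/
lemma AsymptoticRelation.dist_conv_sub {X : ℕ → Type u} {Y : Type v}
    [∀ i, MetricSpace (X i)] [MetricSpace Y]
    {T : TopologicalSpace ((Σ i, X i) ⊕ Y)} (hT : AsymptoticRelation X Y T)
    {a w : ∀ i, X i} {p y : Y} {φ : ℕ → ℕ} (hφ : StrictMono φ)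
    (ha : ConvTo X Y T a p) (hw : SubConvTo X Y T φ (fun k => w (φ k)) y) :
    Tendsto (fun k => dist (a (φ k)) (w (φ k))) atTop (nhds (dist p y)) := by
  classical
  obtain ⟨b, hb⟩ := hT.exists_approx y
  -- Off the range of `φ`, replace `w` by a sequence known to converge to `y`.
  let w' : ∀ i, X i := fun i => if i ∈ Set.range φ then w i else b i
  have hw' : ConvTo X Y T w' y := by
    intro U hU
    rw [Filter.mem_map]
    obtain ⟨K, hK⟩ := eventually_atTop.1 (hw.eventually_mem hU)
    filter_upwards [hb.eventually_mem hU, eventually_ge_atTop (φ K)] with i hi hKi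
    by_cases hr : i ∈ Set.range φ
    · have hwi : w' i = w i := if_pos hr
      obtain ⟨k, rfl⟩ := hr
      have := hK k (hφ.le_iff_le.1 hKi)
      simpa only [Set.mem_preimage, hwi] using this
    · have hwi : w' i = b i := if_neg hr
      simpa only [Set.mem_preimage, hwi] using hi
  have h := (hT.dist_conv a w' p y ha hw').comp hφ.tendsto_atTop
  refine h.congr fun k => ?_
  have hwk : w' (φ k) = w (φ k) := if_pos ⟨k, rfl⟩
  simp only [Function.comp_apply, hwk]

/-- If `E i` compactly converges to `F` and `Y` is separable, then `F` is compact: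
every bounded sequence in `Y` with bounded energies has a convergent subsequence. -/
theorem stmt_9 (X : ℕ → Type u) (Y : Type v)
    [∀ i, MetricSpace (X i)] [MetricSpace Y]
    [TopologicalSpace.SeparableSpace Y]
    (T : TopologicalSpace ((Σ i, X i) ⊕ Y))
    (hT : AsymptoticRelation X Y T)
    (E : ∀ i, X i → ℝ≥0∞) (F : Y → ℝ≥0∞)
    (hcc : CompactConv X Y T E F) :
    ∀ x : ℕ → Y, Bornology.IsBounded (Set.range x) →
      (atTop.limsup fun j => F (x j)) < ⊤ →
      ∃ φ : ℕ → ℕ, StrictMono φ ∧ ∃ a : Y,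
        Tendsto (fun k => x (φ k)) atTop (nhds a) := by
  intro x hx hlim
  obtain ⟨⟨hrec, -⟩, hcomp⟩ := hcc
  have : Nonempty Y := ⟨x 0⟩
  let q := TopologicalSpace.denseSeq Y
  have hq : DenseRange q := TopologicalSpace.denseRange_denseSeq Y
  choose z hz hzE using fun j => hrec (x j)
  choose a ha using fun m => hT.exists_approx (q m)
  obtain ⟨C, hC, hCtop⟩ := exists_between hlim
  have hFC : ∀ᶠ j in atTop, F (x j) < C := eventually_lt_of_limsup_lt hC
  obtain ⟨J, hJ, hP⟩ := exists_diagonal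
    (fun j i => (F (x j) < C → E i (z j i) < C) ∧
      ∀ m ∈ Set.Iic j, |dist (a m i) (z j i) - dist (q m) (x j)| < 1 / ((j : ℝ) + 1)) (by
    intro j
    refine Filter.Eventually.and ?_ ?_
    · by_cases hj : F (x j) < C
      · filter_upwards [(hzE j).eventually_lt_const hj] with i hi _ using hi
      · exact Eventually.of_forall fun i h => absurd h hj
    · refine (Filter.eventually_all_finite (Set.finite_Iic j)).2 fun m _ => ?_
      have h := hT.dist_conv (a m) (z j) (q m) (x j) (ha m) (hz j)
      have h2 := Metric.tendsto_nhds.1 h (1 / ((j : ℝ) + 1)) (by positivity)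
      simpa only [Real.dist_eq] using h2)
  let w : ∀ i, X i := fun i => z (J i) i
  have hwE : (atTop.limsup fun i => E i (w i)) < ⊤ := by
    refine lt_of_le_of_lt (limsup_le_of_le (h := ?_)) hCtop
    filter_upwards [hP, hJ.eventually hFC] with i hi hi2
    exact (hi.1 hi2).le
  have hwb : BoundedSeq X Y T w := by
    refine ⟨a 0, q 0, ha 0, ?_⟩
    obtain ⟨R, hR⟩ := hx.subset_closedBall (q 0)
    have hbd : IsBoundedUnder (· ≤ ·) atTop (fun i => dist (w i) (a 0 i)) := by
      refine ⟨R + 1, eventually_map.2 ?_⟩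
      filter_upwards [hP] with i hi
      have h1 := (abs_lt.1 (hi.2 0 (Nat.zero_le _))).2
      have h2 : dist (x (J i)) (q 0) ≤ R := hR ⟨J i, rfl⟩
      have h3 : 1 / ((J i : ℝ) + 1) ≤ 1 := by
        rw [div_le_one (by positivity)]
        linarith [(Nat.cast_nonneg (J i) : (0 : ℝ) ≤ J i)]
      rw [dist_comm] at h2
      rw [dist_comm]
      change dist (a 0 i) (z (J i) i) ≤ R + 1
      linarith
    obtain ⟨B, hB⟩ := hbd.bddAbove_range
    exact ⟨B, fun i => hB ⟨i, rfl⟩⟩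
  obtain ⟨φ, hφ, y, hy⟩ := hcomp w hwb hwE
  have hJφ : Tendsto (fun k => J (φ k)) atTop atTop := hJ.comp hφ.tendsto_atTop
  have hdist : ∀ m, Tendsto (fun k => dist (q m) (x (J (φ k)))) atTop (nhds (dist (q m) y)) := by
    intro m
    have h1 := hT.dist_conv_sub hφ (ha m) hy
    have h2 : Tendsto (fun k => dist (a m (φ k)) (w (φ k)) - dist (q m) (x (J (φ k))))
        atTop (nhds 0) := by
      have h3 : Tendsto (fun k => 1 / ((J (φ k) : ℝ) + 1)) atTop (nhds 0) :=
        tendsto_one_div_add_atTop_nhds_zero_nat.comp hJφ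
      refine squeeze_zero_norm' ?_ h3
      filter_upwards [hφ.tendsto_atTop.eventually hP, hJφ.eventually_ge_atTop m] with k hk hm
      exact (hk.2 m hm).le
    simpa using h1.sub h2
  have hconv : Tendsto (fun k => x (J (φ k))) atTop (nhds y) := by
    refine Metric.tendsto_nhds.2 fun ε hε => ?_
    obtain ⟨m, hm⟩ := hq.exists_dist_lt y (half_pos hε)
    rw [dist_comm] at hm
    filter_upwards [(hdist m).eventually_lt_const hm] with k hk
    have h := dist_triangle_left (x (J (φ k))) y (q m)
    linarith
  obtain ⟨ψ, hψ, hJψ⟩ := strictMono_subseq_of_tendsto_atTop hJφ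
  exact ⟨_, hJψ, y, hconv.comp hψ.tendsto_atTop⟩
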